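/- arXiv:1501.02547 — 2 statements merged into one kernel-verified Lean document; each statement's English description precedes it below -/
import Mathlib

section
/- Let D₈ denote the dihedral group of order 8. For every natural number n, the group homology H_n(D₈; F₂) with trivial coefficients F₂ is an F₂-vector space of dimension n + 1. -/
open TensorProduct MulOpposite CategoryTheory

section Machinery

variable (k : Type) [CommRing k] (S : Type) [Ring S] [Algebra k S] (P : Set (S × S))

/-- The `k`-submodule of (the restriction of scalars of) an `S`-module `N` generated by all
differences `p.1 • n - p.2 • n` for pairs `p ∈ P` and `n ∈ N`. -/
noncomputable def relSub (N : ModuleCat S) :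
    Submodule k ((ModuleCat.restrictScalars (algebraMap k S)).obj N) :=
  Submodule.span k {x | ∃ p ∈ P, ∃ n : N, x = p.1 • n - p.2 • n}

/-- The "coinvariants"-type additive functor sending an `S`-module `N` to its quotient,
as a `k`-module, by the span of all elements `p.1 • n - p.2 • n` for `p ∈ P`, `n ∈ N`. -/
noncomputable def coinvFunctor : ModuleCat S ⥤ ModuleCat k where
  obj N := ModuleCat.of k (((ModuleCat.restrictScalars (algebraMap k S)).obj N) ⧸ relSub k S P N)
  map {N N'} f := ModuleCat.ofHom <| Submodule.mapQ (relSub k S P N) (relSub k S P N')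
      ((ModuleCat.restrictScalars (algebraMap k S)).map f).hom (by
    rw [relSub, Submodule.span_le]
    rintro x ⟨p, hp, n, rfl⟩
    have : ((ModuleCat.restrictScalars (algebraMap k S)).map f) (p.1 • n - p.2 • n)
        = p.1 • (f n) - p.2 • (f n) := by
      show f (p.1 • n - p.2 • n) = _
      rw [map_sub, f.hom.map_smul, f.hom.map_smul]
    refine (congrArg (· ∈ relSub k S P N') this).mpr ?_
    exact Submodule.subset_span ⟨p, hp, f n, rfl⟩)
  map_id _ := ModuleCat.hom_ext (Submodule.linearMap_qext _ (LinearMap.ext fun _ => rfl))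
  map_comp _ _ := ModuleCat.hom_ext (Submodule.linearMap_qext _ (LinearMap.ext fun _ => rfl))

instance : (coinvFunctor k S P).Additive where
  map_add := ModuleCat.hom_ext (Submodule.linearMap_qext _ (LinearMap.ext fun _ => rfl))

end Machinery

/-- Group homology `H_n(G; k)` with trivial coefficients `k`: the `n`-th left derived functor
(that is, `Tor_n` over the group algebra `MonoidAlgebra k G`) of the coinvariants functor
`N ↦ N / span { g•n - n }`, evaluated at the trivial one-dimensional representation `k`
(made a `MonoidAlgebra k G`-module via the augmentation map). -/
noncomputable def GroupHomology (k : Type) [CommRing k] (G : Type) [Group G] (n : ℕ) :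
    ModuleCat k :=
  letI : Module (MonoidAlgebra k G) k :=
    Module.compHom k (MonoidAlgebra.lift k k G 1).toRingHom
  ((coinvFunctor k (MonoidAlgebra k G)
      {p | ∃ g : G, p = (MonoidAlgebra.single g 1, 1)}).leftDerived n).obj
    (ModuleCat.of (MonoidAlgebra k G) k)


namespace DihedralRes

abbrev G : Type := DihedralGroup 4
abbrev F2 : Type := ZMod 2
abbrev R : Type := MonoidAlgebra F2 G

/-- the augmentation -/
noncomputable def aug : R →ₐ[F2] F2 := MonoidAlgebra.lift F2 F2 G 1

noncomputable def X : R := MonoidAlgebra.single (DihedralGroup.sr 0) 1 + 1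
noncomputable def Y : R := MonoidAlgebra.single (DihedralGroup.sr 1) 1 + 1

abbrev Mat : Type := Matrix (Fin 8) (Fin 8) (ZMod 2)

def elts : Fin 8 → G := ![.r 0, .r 1, .r 2, .r 3, .sr 0, .sr 1, .sr 2, .sr 3]

lemma elts_bij : Function.Bijective elts := by
  constructor
  · unfold Function.Injective; decide
  · unfold Function.Surjective; decide

noncomputable def bb : Module.Basis (Fin 8) F2 R :=
  (MonoidAlgebra.basis G F2).reindex (Equiv.ofBijective elts elts_bij).symm

lemma bb_apply (i : Fin 8) : bb i = MonoidAlgebra.single (elts i) 1 := by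
  simp [bb]

noncomputable def op : Mat ≃ₐ[F2] Module.End F2 R := Matrix.toLinAlgEquiv bb

lemma op_bb (M : Mat) (j : Fin 8) :
    op M (bb j) = ∑ i, M i j • bb i := by
  simp [op, Matrix.toLinAlgEquiv_self]

def mX : Mat := !![1, 0, 0, 0, 1, 0, 0, 0; 0, 1, 0, 0, 0, 0, 0, 1; 0, 0, 1, 0, 0, 0, 1, 0; 0, 0, 0, 1, 0, 1, 0, 0; 1, 0, 0, 0, 1, 0, 0, 0; 0, 0, 0, 1, 0, 1, 0, 0; 0, 0, 1, 0, 0, 0, 1, 0; 0, 1, 0, 0, 0, 0, 0, 1]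
def mY : Mat := !![1, 0, 0, 0, 0, 1, 0, 0; 0, 1, 0, 0, 1, 0, 0, 0; 0, 0, 1, 0, 0, 0, 0, 1; 0, 0, 0, 1, 0, 0, 1, 0; 0, 1, 0, 0, 1, 0, 0, 0; 1, 0, 0, 0, 0, 1, 0, 0; 0, 0, 0, 1, 0, 0, 1, 0; 0, 0, 1, 0, 0, 0, 0, 1]
def mH : Mat := !![0, 1, 0, 0, 1, 0, 0, 0; 0, 0, 0, 0, 0, 0, 0, 1; 0, 0, 0, 0, 0, 0, 0, 0; 0, 0, 1, 0, 0, 0, 0, 0; 0, 0, 0, 0, 0, 0, 0, 1; 0, 0, 0, 1, 0, 0, 1, 0; 0, 0, 1, 0, 0, 0, 0, 0; 0, 0, 0, 0, 0, 0, 0, 0]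
def mH1 : Mat := !![0, 1, 0, 0, 1, 0, 0, 0; 0, 0, 1, 0, 0, 0, 0, 1; 0, 0, 0, 0, 0, 0, 0, 0; 0, 0, 0, 0, 0, 0, 0, 0; 0, 0, 1, 0, 0, 0, 0, 1; 0, 0, 0, 1, 0, 0, 1, 0; 0, 0, 0, 0, 0, 0, 0, 0; 0, 0, 0, 0, 0, 0, 0, 0]
def mK : Mat := !![0, 0, 0, 1, 0, 1, 0, 0; 0, 0, 1, 0, 0, 0, 0, 0; 0, 0, 0, 0, 0, 0, 0, 0; 0, 0, 0, 0, 0, 0, 1, 0; 0, 1, 0, 0, 0, 0, 0, 1; 0, 0, 0, 0, 0, 0, 1, 0; 0, 0, 0, 0, 0, 0, 0, 0; 0, 0, 1, 0, 0, 0, 0, 0]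
def mA : Mat := !![0, 0, 1, 0, 0, 0, 1, 0; 0, 0, 0, 0, 0, 0, 0, 0; 0, 0, 0, 0, 0, 0, 0, 0; 0, 0, 0, 0, 0, 0, 0, 0; 0, 0, 0, 0, 0, 0, 0, 0; 0, 0, 0, 0, 0, 0, 0, 0; 0, 0, 0, 0, 0, 0, 0, 0; 0, 0, 0, 0, 0, 0, 0, 0]
def mE : Mat := fun i _ => if i = 0 then 1 else 0
def mX3 : Mat := mX * (mY * mX)
def mY3 : Mat := mY * (mX * mY)

lemma op_X (r : R) : r * X = op mX r := by
  suffices h : LinearMap.mulRight F2 X = op mX by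
    rw [← h]; rfl
  refine bb.ext fun j => ?_
  rw [op_bb]
  simp only [LinearMap.mulRight_apply, bb_apply, X, mul_add, MonoidAlgebra.single_mul_single,
    mul_one, Fin.sum_univ_eight]
  fin_cases j <;> simp [elts, mX] <;> first | rfl | exact add_comm _ _

lemma op_Y (r : R) : r * Y = op mY r := by
  suffices h : LinearMap.mulRight F2 Y = op mY by
    rw [← h]; rfl
  refine bb.ext fun j => ?_
  rw [op_bb]
  simp only [LinearMap.mulRight_apply, bb_apply, Y, mul_add, MonoidAlgebra.single_mul_single,
    mul_one, Fin.sum_univ_eight]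
  fin_cases j <;> simp [elts, mY] <;> first | rfl | exact add_comm _ _

lemma op_E (r : R) : op mE r = MonoidAlgebra.single 1 (aug r) := by
  suffices h : op mE = MonoidAlgebra.lsingle 1 ∘ₗ aug.toLinearMap by
    rw [h]; rfl
  refine bb.ext fun j => ?_
  rw [op_bb]
  simp [bb_apply, aug, mE, elts]

lemma m1 : mX * mH + mH * mX = 1 := by decide +kernel
lemma m2 : mY3 * mH + mH * mY3 = 0 := by decide +kernel
lemma m3 : mY3 * mH1 + mH * mY3 = 0 := by decide +kernel
lemma m4 : mY * mK + mK * mY = 1 := by decide +kernel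
lemma m5 : mX3 * mK + mK * mX3 = 0 := by decide +kernel
lemma m6 : mX * mH + mY3 * mA + mH1 * mX = 1 := by decide +kernel
lemma m7 : mH1 * mY = 0 := by decide +kernel
lemma m8 : mX3 * mA + mK * mX = 0 := by decide +kernel
lemma m9 : mA * mX = 0 := by decide +kernel
lemma m10 : mX * mH1 + mY * mK + mE = 1 := by decide +kernel
lemma m11 : mA * mY3 = mE := by decide +kernel
lemma m12 : mX * mX = 0 := by decide +kernel
lemma m13 : mY * mY = 0 := by decide +kernel
lemma m14 : mX * mY3 = mY * mX3 := by decide +kernel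

noncomputable def X3 : R := X * (Y * X)
noncomputable def Y3 : R := Y * (X * Y)

lemma op_X3 (r : R) : r * X3 = op mX3 r := by
  rw [X3, mX3, ← mul_assoc, ← mul_assoc, op_X (r * X * Y), op_Y, op_X]
  simp only [map_mul, Module.End.mul_apply]

lemma op_Y3 (r : R) : r * Y3 = op mY3 r := by
  rw [Y3, mY3, ← mul_assoc, ← mul_assoc, op_Y (r * Y * X), op_X, op_Y]
  simp only [map_mul, Module.End.mul_apply]

lemma XX : X * X = 0 := by
  rw [← one_mul (X * X), ← mul_assoc, op_X, op_X, ← Module.End.mul_apply, ← map_mul, m12]; simp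

lemma YY : Y * Y = 0 := by
  rw [← one_mul (Y * Y), ← mul_assoc, op_Y, op_Y, ← Module.End.mul_apply, ← map_mul, m13]; simp

lemma XY4 : Y3 * X = X3 * Y := by
  rw [← one_mul (Y3 * X), ← one_mul (X3 * Y), ← mul_assoc, ← mul_assoc, op_X, op_Y3, op_Y, op_X3,
    ← Module.End.mul_apply, ← map_mul, m14, map_mul, Module.End.mul_apply]

noncomputable def hH : R →ₗ[F2] R := op mH
noncomputable def hH1 : R →ₗ[F2] R := op mH1
noncomputable def hK : R →ₗ[F2] R := op mK
noncomputable def hA : R →ₗ[F2] R := op mA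

lemma i1 (r : R) : hH r * X + hH (r * X) = r := by
  simpa [op_X, hH] using! congrArg (fun M => op M r) m1
lemma i2 (r : R) : hH r * Y3 + hH (r * Y3) = 0 := by
  simpa [op_Y3, hH] using! congrArg (fun M => op M r) m2
lemma i3 (r : R) : hH1 r * Y3 + hH (r * Y3) = 0 := by
  simpa [op_Y3, hH, hH1] using! congrArg (fun M => op M r) m3
lemma i4 (r : R) : hK r * Y + hK (r * Y) = r := by
  simpa [op_Y, hK] using! congrArg (fun M => op M r) m4
lemma i5 (r : R) : hK r * X3 + hK (r * X3) = 0 := by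
  simpa [op_X3, hK] using! congrArg (fun M => op M r) m5
lemma i6 (r : R) : hH r * X + hA r * Y3 + hH1 (r * X) = r := by
  simpa [op_X, op_Y3, hH, hA, hH1] using! congrArg (fun M => op M r) m6
lemma i7 (r : R) : hH1 (r * Y) = 0 := by
  simpa [op_Y, hH1] using! congrArg (fun M => op M r) m7
lemma i8 (r : R) : hA r * X3 + hK (r * X) = 0 := by
  simpa [op_X, op_X3, hA, hK] using! congrArg (fun M => op M r) m8
lemma i9 (r : R) : hA (r * X) = 0 := by
  simpa [op_X, hA] using! congrArg (fun M => op M r) m9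
lemma i10 (r : R) : hH1 r * X + hK r * Y + MonoidAlgebra.single 1 (aug r) = r := by
  simpa [← op_E, op_X, op_Y, hH1, hK] using! congrArg (fun M => op M r) m10
lemma i11 (r : R) : hA (r * Y3) = MonoidAlgebra.single 1 (aug r) := by
  simpa [← op_E, op_Y3, hA] using! congrArg (fun M => op M r) m11

noncomputable def al (n i : ℕ) : R := if 2 * i ≤ n then Y3 else Y
noncomputable def be (n i : ℕ) : R := if 2 * i < n then X else X3

lemma aug_X : aug X = 0 := by
  simp only [aug, X, map_add, map_one, MonoidAlgebra.lift_single]; decide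
lemma aug_Y : aug Y = 0 := by
  simp only [aug, Y, map_add, map_one, MonoidAlgebra.lift_single]; decide
lemma aug_al (n i : ℕ) : aug (al n i) = 0 := by
  unfold al Y3; split_ifs <;> simp [aug_X, aug_Y]
lemma aug_be (n i : ℕ) : aug (be n i) = 0 := by
  unfold be X3; split_ifs <;> simp [aug_X, aug_Y]

lemma al_al (n i m j : ℕ) : al n i * al m j = 0 := by
  have h (r : R) : Y * (Y * r) = 0 := by rw [← mul_assoc, YY, zero_mul]
  unfold al Y3; split_ifs <;> simp [mul_assoc, h, YY]
lemma be_be (n i m j : ℕ) : be n i * be m j = 0 := by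
  have h (r : R) : X * (X * r) = 0 := by rw [← mul_assoc, XX, zero_mul]
  unfold be X3; split_ifs <;> simp [mul_assoc, h, XX]

lemma two_R (r : R) : r + r = 0 := by
  rw [← two_smul F2 r, show (2 : F2) = 0 from rfl, zero_smul]

lemma al_be (n i : ℕ) :
    al (n + 1) (i + 1) * be n i + be (n + 1) (i + 1) * al n (i + 1) = 0 := by
  have h1 : Y * X3 = X * Y3 := by
    have := XY4
    simp only [X3, Y3, mul_assoc] at this ⊢
    exact this
  have h2 := XY4
  unfold al be
  rcases lt_trichotomy (2 * (i + 1)) (n + 1) with h | h | h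
  · rw [if_pos (by omega), if_pos (by omega), if_pos (by omega), if_pos (by omega), h2, ← h1]
    simp only [X3, mul_assoc]
    have := two_R (Y * (X * (Y * X)))
    simp only [X3, Y3, mul_assoc] at h1 h2
    rw [h1] at this ⊢
    exact this
  · rw [if_pos (by omega), if_pos (by omega), if_neg (by omega), if_neg (by omega), h2]
    exact two_R _
  · rw [if_neg (by omega), if_neg (by omega), if_neg (by omega), if_neg (by omega)]
    have := two_R (Y * (X * (Y * X)))
    simp only [X3, Y3, mul_assoc] at h1 h2 ⊢
    rw [h1] at this ⊢
    exact this

noncomputable def dLin (n : ℕ) : (Fin (n + 2) → R) →ₗ[R] (Fin (n + 1) → R) where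
  toFun r j := r j.castSucc * be (n + 1) j + r j.succ * al (n + 1) (j + 1)
  map_add' r s := by
    ext1 j; simp only [Pi.add_apply, add_mul]; abel
  map_smul' c r := by
    ext1 j; simp only [Pi.smul_apply, smul_eq_mul, mul_add, mul_assoc, RingHom.id_apply]

lemma dLin_apply (n : ℕ) (r : Fin (n + 2) → R) (j : Fin (n + 1)) :
    dLin n r j = r j.castSucc * be (n + 1) j + r j.succ * al (n + 1) (j + 1) := rfl

lemma dLin_dLin (n : ℕ) (r : Fin (n + 3) → R) : dLin n (dLin (n + 1) r) = 0 := by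
  ext1 j
  rw [dLin_apply, dLin_apply, dLin_apply]
  simp only [add_mul, mul_assoc, be_be, al_al, mul_zero, zero_add, add_zero, Fin.val_succ,
    Fin.val_castSucc, Fin.succ_castSucc, Pi.zero_apply]
  rw [← mul_add]
  rw [al_be, mul_zero]

noncomputable def sT (N : ℕ) (ρ : ℕ → R) (j : ℕ) : R :=
  if 2 * j < N then hH (ρ j) else if 2 * j = N then hH1 (ρ j) else
    if 2 * j = N + 1 then hA (ρ (j - 1)) else hK (ρ (j - 1))

lemma exact_nat (N : ℕ) (hN : 0 < N) (ρ : ℕ → R)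
    (hρ : ∀ j < N, ρ j * be N j + ρ (j + 1) * al N (j + 1) = 0) (j : ℕ) (hj : j ≤ N) :
    sT N ρ j * be (N + 1) j + sT N ρ (j + 1) * al (N + 1) (j + 1) = ρ j := by
  by_cases c1 : 2 * (j + 1) < N
  · have h := congrArg hH (hρ j (by omega))
    rw [map_add, map_zero, be, al, if_pos (by omega), if_pos (by omega)] at h
    rw [sT, sT, be, al, if_pos (by omega), if_pos (by omega), if_pos (by omega), if_pos (by omega)]
    linear_combination (norm := abel) i1 (ρ j) + i2 (ρ (j + 1)) - h
  by_cases c2 : 2 * (j + 1) = N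
  · have h := congrArg hH (hρ j (by omega))
    rw [map_add, map_zero, be, al, if_pos (by omega), if_pos (by omega)] at h
    rw [sT, sT, be, al, if_pos (by omega), if_pos (by omega), if_neg (by omega),
      if_pos (by omega), if_pos (by omega)]
    linear_combination (norm := abel) i1 (ρ j) + i3 (ρ (j + 1)) - h
  by_cases c3 : 2 * (j + 1) = N + 1
  · have h := congrArg hH1 (hρ j (by omega))
    rw [map_add, map_zero, be, al, if_pos (by omega), if_neg (by omega)] at h
    rw [sT, sT, be, al, if_pos (by omega), if_pos (by omega), if_neg (by omega),
      if_neg (by omega), if_pos (by omega), if_pos (by omega), Nat.add_sub_cancel]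
    linear_combination (norm := abel) i6 (ρ j) + i7 (ρ (j + 1)) - h
  rw [sT, sT, if_neg c1, if_neg c2, if_neg c3, Nat.add_sub_cancel]
  obtain ⟨i, rfl⟩ : ∃ i, j = i + 1 := ⟨j - 1, by omega⟩
  have h0 := hρ i (by omega)
  rw [Nat.add_sub_cancel]
  by_cases c4 : 2 * (i + 1) = N
  · have h := congrArg hA h0
    rw [map_add, map_zero, be, al, if_pos (by omega), if_pos (by omega), i11, i9, zero_add] at h
    rw [be, al, if_neg (by omega), if_pos (by omega), if_pos (by omega), if_neg (by omega)]
    linear_combination (norm := abel) i10 (ρ (i + 1)) - h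
  by_cases c5 : 2 * (i + 1) = N + 1
  · have h := congrArg hK h0
    rw [map_add, map_zero, be, al, if_pos (by omega), if_neg (by omega)] at h
    rw [be, al, if_neg (by omega), if_neg (by omega), if_pos (by omega), if_neg (by omega),
      if_neg (by omega)]
    linear_combination (norm := abel) i8 (ρ i) + i4 (ρ (i + 1)) - h
  · have h := congrArg hK h0
    rw [map_add, map_zero, be, al, if_neg (by omega), if_neg (by omega)] at h
    rw [be, al, if_neg (by omega), if_neg (by omega), if_neg (by omega), if_neg (by omega),
      if_neg (by omega)]
    linear_combination (norm := abel) i5 (ρ i) + i4 (ρ (i + 1)) - h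

lemma exact_succ (n : ℕ) (r : Fin (n + 2) → R) (hr : dLin n r = 0) :
    ∃ t, dLin (n + 1) t = r := by
  let ρ : ℕ → R := fun i => if h : i < n + 2 then r ⟨i, h⟩ else 0
  have hρ (i : Fin (n + 2)) : ρ i = r i := by simp [ρ]
  refine ⟨fun j => sT (n + 1) ρ j, ?_⟩
  ext1 j
  rw [dLin_apply, ← hρ]
  refine exact_nat (n + 1) (by omega) ρ (fun i hi => ?_) j (by omega)
  have h := congrFun hr ⟨i, hi⟩
  rw [dLin_apply, ← hρ, ← hρ] at h
  exact h

lemma exact_zero (r : Fin 1 → R) (hr : aug (r 0) = 0) : ∃ t, dLin 0 t = r := by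
  refine ⟨![hH1 (r 0), hK (r 0)], ?_⟩
  ext1 j
  have h := i10 (r 0)
  rw [hr, MonoidAlgebra.single_zero, add_zero] at h
  fin_cases j
  rw [dLin_apply]
  simpa [be, al] using h

lemma aug_d (n : ℕ) (r : Fin (n + 2) → R) (j : Fin (n + 1)) : aug (dLin n r j) = 0 := by
  rw [dLin_apply]; simp [aug_al, aug_be]

lemma aug_single (c : F2) : aug (MonoidAlgebra.single 1 c) = c := by simp [aug]

@[reducible] noncomputable def trivMod : Module R F2 :=
  Module.compHom F2 (MonoidAlgebra.lift F2 F2 G 1).toRingHom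

noncomputable def triv : ModuleCat R :=
  letI := trivMod
  ModuleCat.of R F2

noncomputable def cplx : ChainComplex (ModuleCat R) ℕ :=
  ChainComplex.of (fun n => ModuleCat.of R (Fin (n + 1) → R)) (fun n => ModuleCat.ofHom (dLin n))
    (fun n => by
      refine ModuleCat.hom_ext (LinearMap.ext fun r => ?_)
      exact dLin_dLin n r)

lemma cplx_d (n : ℕ) : cplx.d (n + 1) n = ModuleCat.ofHom (dLin n) :=
  ChainComplex.of_d (fun n => ModuleCat.of R (Fin (n + 1) → R))
    (fun n => ModuleCat.ofHom (dLin n)) n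

noncomputable def eps : ModuleCat.of R (Fin 1 → R) ⟶ triv :=
  letI := trivMod
  ModuleCat.ofHom (Y := F2)
    { toFun := fun r => aug (r 0)
      map_add' := fun r s => by simp
      map_smul' := fun c r => by
        rw [Pi.smul_apply, smul_eq_mul, map_mul]; rfl }

lemma eps_apply (r : Fin 1 → R) : eps.hom r = aug (r 0) := rfl

lemma d_eps : cplx.d 1 0 ≫ (show cplx.X 0 ⟶ triv from eps) = 0 := by
  rw [cplx_d]
  refine ModuleCat.hom_ext (LinearMap.ext fun r => ?_)
  exact aug_d 0 r 0

noncomputable def piMap : cplx ⟶ (ChainComplex.single₀ (ModuleCat R)).obj triv :=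
  (cplx.toSingle₀Equiv triv).symm ⟨eps, d_eps⟩

lemma piMap_quasiIso : QuasiIso piMap where
  quasiIsoAt m := by
    induction m with
    | zero =>
      rw [ChainComplex.quasiIsoAt₀_iff, ShortComplex.quasiIso_iff_of_zeros' _ rfl rfl rfl]
      constructor
      · rw [ShortComplex.moduleCat_exact_iff]
        intro x hx
        have hx' : aug ((show Fin 1 → R from x) 0) = 0 := by
          simpa [piMap, ChainComplex.toSingle₀Equiv] using! hx
        obtain ⟨t, ht⟩ := exact_zero x hx'
        refine ⟨t, ?_⟩
        have : (cplx.d 1 0).hom t = x := by rw [cplx_d]; exact ht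
        exact this
      · rw [ModuleCat.epi_iff_surjective]
        intro x
        refine ⟨(fun _ => MonoidAlgebra.single 1 x : Fin 1 → R), ?_⟩
        have : eps.hom (fun _ => MonoidAlgebra.single 1 (show F2 from x) : Fin 1 → R) = x := by
          rw [eps_apply]; exact aug_single _
        simpa [piMap, ChainComplex.toSingle₀Equiv] using! this
    | succ m _ =>
      rw [quasiIsoAt_iff_exactAt' (hL := ChainComplex.exactAt_succ_single_obj ..),
          HomologicalComplex.exactAt_iff' _ (m + 2) (m + 1) m (by simp) (by simp),
          ShortComplex.moduleCat_exact_iff]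
      intro x hx
      have hx' : (cplx.d (m + 1) m).hom x = 0 := hx
      rw [cplx_d] at hx'
      obtain ⟨t, ht⟩ := exact_succ m x hx'
      refine ⟨t, ?_⟩
      have : (cplx.d (m + 2) (m + 1)).hom t = x := by rw [cplx_d]; exact ht
      exact this

noncomputable def res : ProjectiveResolution triv where
  complex := cplx
  projective n := by
    change Projective (ModuleCat.of R (Fin (n + 1) → R))
    exact ModuleCat.projective_of_free (Pi.basisFun R (Fin (n + 1)))
  π := piMap
  quasiIso := piMap_quasiIso

abbrev PP : Set (R × R) := {p | ∃ g : G, p = (MonoidAlgebra.single g 1, 1)}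

/-- componentwise augmentation -/
noncomputable def augPi (m : ℕ) :
    ((ModuleCat.restrictScalars (algebraMap F2 R)).obj (ModuleCat.of R (Fin m → R)))
      →ₗ[F2] (Fin m → F2) where
  toFun v j := aug ((show Fin m → R from v) j)
  map_add' v w := by
    ext1 j; exact map_add aug _ _
  map_smul' c v := by
    ext1 j
    have : aug (algebraMap F2 R c * (show Fin m → R from v) j)
      = c * aug ((show Fin m → R from v) j) := by
      rw [map_mul, AlgHom.commutes]; rfl
    exact this

lemma augPi_apply (m : ℕ) (v : Fin m → R) (j : Fin m) : augPi m v j = aug (v j) := rfl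

lemma augPi_surj (m : ℕ) : Function.Surjective (augPi m) := fun w => by
  refine ⟨(fun j => MonoidAlgebra.single 1 (w j) : Fin m → R), ?_⟩
  ext1 j
  rw [augPi_apply]; simp [aug]

lemma mem_rel (N : ModuleCat R) (r : R) (v : N) :
    (show ((ModuleCat.restrictScalars (algebraMap F2 R)).obj N) from
      r • v - algebraMap F2 R (aug r) • v) ∈ relSub F2 R PP N := by
  induction r using MonoidAlgebra.induction_linear with
  | zero => 
    have : (0 : R) • v - algebraMap F2 R (aug 0) • v = 0 := by simp
    rw [this]; exact zero_mem _
  | add f g hf hg =>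
    have : (f + g) • v - algebraMap F2 R (aug (f + g)) • v =
      (f • v - algebraMap F2 R (aug f) • v) + (g • v - algebraMap F2 R (aug g) • v) := by
      simp only [add_smul, map_add]; abel
    rw [this]; exact add_mem hf hg
  | single g c =>
    have : (MonoidAlgebra.single g c : R) • v - algebraMap F2 R (aug (.single g c)) • v =
      algebraMap F2 R c • ((MonoidAlgebra.single g 1 : R) • v - (1 : R) • v) := by
      rw [smul_sub, smul_smul, one_smul]
      simp [aug]
    rw [this]
    exact Submodule.smul_mem _ c (Submodule.subset_span ⟨_, ⟨g, rfl⟩, v, rfl⟩)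

lemma rel_eq_ker (m : ℕ) :
    relSub F2 R PP (ModuleCat.of R (Fin m → R)) = LinearMap.ker (augPi m) := by
  apply le_antisymm
  · rw [relSub, Submodule.span_le]
    rintro x ⟨p, ⟨g, rfl⟩, v, rfl⟩
    change augPi m _ = 0
    ext1 j
    change aug ((MonoidAlgebra.single g 1 : R) * (show Fin m → R from v) j
      - 1 * (show Fin m → R from v) j) = 0
    simp [aug]
  · intro v hv
    have hv' (j : Fin m) : aug ((show Fin m → R from v) j) = 0 := congrFun hv j
    have key : (show Fin m → R from v) = ∑ j, ((show Fin m → R from v) j • (Pi.single j 1 : Fin m → R)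
        - algebraMap F2 R (aug ((show Fin m → R from v) j)) • (Pi.single j 1 : Fin m → R)) := by
      simp only [hv', map_zero, zero_smul, sub_zero]
      exact pi_eq_sum_univ' _
    have h2 : ∀ j ∈ Finset.univ, _ := fun (j : Fin m) _ =>
      mem_rel (ModuleCat.of R (Fin m → R)) ((show Fin m → R from v) j) (Pi.single j 1 : Fin m → R)
    have := Submodule.sum_mem _ h2
    have e : v = ∑ j, _ := key
    rw [e]
    exact this

noncomputable def coinvEquiv (m : ℕ) :
    (coinvFunctor F2 R PP).obj (ModuleCat.of R (Fin m → R)) ≃ₗ[F2] (Fin m → F2) :=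
  (Submodule.quotEquivOfEq _ _ (rel_eq_ker m)).trans
    ((augPi m).quotKerEquivOfSurjective (augPi_surj m))

lemma coinv_d (n : ℕ) : (coinvFunctor F2 R PP).map (cplx.d (n + 1) n) = 0 := by
  rw [cplx_d]
  refine ModuleCat.hom_ext (Submodule.linearMap_qext _ (LinearMap.ext fun r => ?_))
  have h : (show ((ModuleCat.restrictScalars (algebraMap F2 R)).obj (ModuleCat.of R (Fin (n+1) → R)))
      from dLin n r) ∈ relSub F2 R PP (ModuleCat.of R (Fin (n + 1) → R)) := by
    rw [rel_eq_ker]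
    change augPi _ _ = 0
    ext1 j
    exact aug_d n r j
  exact (Submodule.Quotient.mk_eq_zero _).2 h

noncomputable abbrev FC : ChainComplex (ModuleCat F2) ℕ :=
  ((coinvFunctor F2 R PP).mapHomologicalComplex _).obj cplx

lemma FC_d (i j : ℕ) : FC.d i j = 0 := by
  by_cases h : j + 1 = i
  · subst h
    exact coinv_d j
  · exact FC.shape _ _ h

noncomputable def homIso (n : ℕ) :
    ((coinvFunctor F2 R PP).leftDerived n).obj triv ≅
      (coinvFunctor F2 R PP).obj (ModuleCat.of R (Fin (n + 1) → R)) :=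
  res.isoLeftDerivedObj (coinvFunctor F2 R PP) n ≪≫
    (FC.isoHomologyπ (n + 1) n (by simp) (FC_d _ _)).symm ≪≫
    FC.iCyclesIso n _ rfl (FC_d _ _)

end DihedralRes

/-- The group homology of the dihedral group of order 8 with trivial coefficients `F₂` is an
`F₂`-vector space of dimension `n + 1` in degree `n`. -/
theorem groupHomology_dihedral (n : ℕ) :
    Module.finrank (ZMod 2) (GroupHomology (ZMod 2) (DihedralGroup 4) n) = n + 1 := by
  have e := (DihedralRes.homIso n).toLinearEquiv.trans (DihedralRes.coinvEquiv (n + 1))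
  have h := e.finrank_eq
  rw [Module.finrank_fin_fun] at h
  exact h
end

section
/- For every natural number n, the group homology H_n(C₂ × C₂; F₂) of the Klein four-group with trivial coefficients F₂ is an F₂-vector space of dimension n + 1. -/
open TensorProduct MulOpposite CategoryTheory

namespace KF
abbrev G := Multiplicative (ZMod 2) × Multiplicative (ZMod 2)
abbrev R := MonoidAlgebra (ZMod 2) G
abbrev s : G := (Multiplicative.ofAdd 1, 1)
abbrev t : G := (1, Multiplicative.ofAdd 1)
noncomputable def x : R := MonoidAlgebra.single s 1 - 1
noncomputable def y : R := MonoidAlgebra.single t 1 - 1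

lemma two : (2 : R) = 0 := by
  have h : (algebraMap (ZMod 2) R) 2 = 2 := map_ofNat _ 2
  rw [← h, show (2 : ZMod 2) = 0 from rfl, map_zero]
lemma gcases (g : G) : g = 1 ∨ g = s ∨ g = t ∨ g = s * t := by
  revert g; decide
lemma xx : x * x = 0 := by
  have h : (MonoidAlgebra.single s 1 : R) * MonoidAlgebra.single s 1 = 1 := by
    rw [MonoidAlgebra.single_mul_single, MonoidAlgebra.one_def]; congr 1
  unfold x
  linear_combination h + (1 - MonoidAlgebra.single s 1) * two
lemma yy : y * y = 0 := by
  have h : (MonoidAlgebra.single t 1 : R) * MonoidAlgebra.single t 1 = 1 := by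
    rw [MonoidAlgebra.single_mul_single, MonoidAlgebra.one_def]; congr 1
  unfold y
  linear_combination h + (1 - MonoidAlgebra.single t 1) * two

noncomputable abbrev c (a : ZMod 2) : R := algebraMap (ZMod 2) R a
noncomputable abbrev aug : R →ₐ[ZMod 2] ZMod 2 := MonoidAlgebra.lift (ZMod 2) (ZMod 2) G 1

lemma aug_x : aug x = 0 := by simp [x, aug]
lemma aug_y : aug y = 0 := by simp [y, aug]
lemma aug_c (a : ZMod 2) : aug (c a) = a := by simp [c]

lemma repr (r : R) : ∃ a b d e, r = c a + c b * x + c d * y + c e * (x * y) := by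
  induction r using MonoidAlgebra.induction_on with
  | of g =>
    have hs : (MonoidAlgebra.of (ZMod 2) G s : R) = 1 + x := by simp [x]
    have ht : (MonoidAlgebra.of (ZMod 2) G t : R) = 1 + y := by simp [y]
    rcases gcases g with rfl | rfl | rfl | rfl
    · exact ⟨1, 0, 0, 0, by rw [map_one]; simp⟩
    · exact ⟨1, 1, 0, 0, by rw [hs]; simp⟩
    · exact ⟨1, 0, 1, 0, by rw [ht]; simp⟩
    · exact ⟨1, 1, 1, 1, by rw [map_mul, hs, ht]; simp; ring⟩
  | add u v hu hv =>
    obtain ⟨a, b, d, e, rfl⟩ := hu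
    obtain ⟨a', b', d', e', rfl⟩ := hv
    exact ⟨a + a', b + b', d + d', e + e', by simp only [c, map_add]; ring⟩
  | smul k u hu =>
    obtain ⟨a, b, d, e, rfl⟩ := hu
    exact ⟨k * a, k * b, k * d, k * e, by simp only [c, map_mul, Algebra.smul_def]; ring⟩

lemma cxy (e : ZMod 2) (h : c e * (x * y) = 0) : e = 0 := by
  have h2 := congrArg (fun r : R => r.coeff 1) h
  have : x * y = MonoidAlgebra.single (s * t) 1 - MonoidAlgebra.single s 1
    - MonoidAlgebra.single t 1 + MonoidAlgebra.single 1 1 := by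
    have : (MonoidAlgebra.single (s * t) 1 : R) = MonoidAlgebra.single s 1 * MonoidAlgebra.single t 1 := by
      rw [MonoidAlgebra.single_mul_single, one_mul]
    rw [this, x, y, ← MonoidAlgebra.one_def]; ring
  simp only [this, c, ← Algebra.smul_def] at h2
  have h1 : s * t ≠ 1 := by decide
  have h3 : s ≠ 1 := by decide
  have h4 : t ≠ 1 := by decide
  have h5 : ((Multiplicative.ofAdd 1, Multiplicative.ofAdd 1) : G) ≠ 1 := by decide
  simpa [h1, h3, h4, h5, Finsupp.single_apply, -Prod.mk_eq_one] using h2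

lemma indep {a b d e : ZMod 2} (h : c a + c b * x + c d * y + c e * (x * y) = 0) :
    a = 0 ∧ b = 0 ∧ d = 0 ∧ e = 0 := by
  have ha : a = 0 := by
    apply cxy
    linear_combination x * y * h - (c b * y + c e * y * y) * xx - (c d * x) * yy
  subst ha
  have hb : b = 0 := by
    apply cxy
    have h0 : c 0 = 0 := map_zero _
    linear_combination y * h - c e * x * yy - c d * yy - y * h0
  subst hb
  have hd : d = 0 := by
    apply cxy
    have h0 : c 0 = 0 := map_zero _
    linear_combination x * h - c e * y * xx - (x + x * x) * h0
  subst hd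
  refine ⟨rfl, rfl, rfl, cxy _ ?_⟩
  have h0 : c 0 = 0 := map_zero _
  linear_combination h - (1 + x + y) * h0

noncomputable def dd (n : ℕ) : (Fin (n + 2) → R) →ₗ[R] (Fin (n + 1) → R) where
  toFun f i := x * f i.succ + y * f i.castSucc
  map_add' f g := by ext1 i; simp; ring
  map_smul' r f := by ext1 i; simp; ring

lemma dd_apply (n : ℕ) (f : Fin (n + 2) → R) (i : Fin (n + 1)) :
    dd n f i = x * f i.succ + y * f i.castSucc := rfl

lemma dd_dd (n : ℕ) (f : Fin (n + 3) → R) : dd n (dd (n + 1) f) = 0 := by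
  ext1 i
  simp only [dd_apply, Fin.succ_castSucc, Pi.zero_apply]
  linear_combination f i.succ.succ * xx + f i.castSucc.castSucc * yy
    + x * y * f i.succ.castSucc * two

/-- common core -/
lemma lift_core (n : ℕ) (f : Fin (n + 1) → R) (b d e : Fin (n + 1) → ZMod 2)
    (hf : ∀ i, f i = c (b i) * x + c (d i) * y + c (e i) * (x * y))
    (h : ∀ i : Fin n, d i.succ = b i.castSucc) :
    ∃ g, dd n g = f := by
  refine ⟨Fin.cons (c (d 0)) (fun i => c (b i) + c (e i) * y), ?_⟩
  ext1 i
  rw [dd_apply, hf, Fin.cons_succ]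
  have : (Fin.cons (c (d 0)) (fun i => c (b i) + c (e i) * y) : Fin (n + 2) → R) i.castSucc
      = c (d i) + (if i = 0 then 0 else 1) * (Fin.cons (c (d 0)) (fun i => c (e i) * y) : Fin (n + 2) → R) i.castSucc := by
    refine Fin.cases ?_ (fun j => ?_) i
    · simp
    · rw [← Fin.succ_castSucc, Fin.cons_succ, Fin.cons_succ, h]; simp
  have h2 : y * ((if i = 0 then 0 else 1) * (Fin.cons (c (d 0)) (fun i => c (e i) * y) : Fin (n + 2) → R) i.castSucc) = 0 := by
    refine Fin.cases ?_ (fun j => ?_) i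
    · simp
    · rw [← Fin.succ_castSucc, Fin.cons_succ]; simp; linear_combination c (e j.castSucc) * yy
  rw [this]
  linear_combination h2

lemma exact_succ (n : ℕ) (f : Fin (n + 2) → R) (hf : dd n f = 0) : ∃ g, dd (n + 1) g = f := by
  choose a b d e h using fun i => repr (f i)
  have key : ∀ i : Fin (n + 1), a i.succ = 0 ∧ a i.castSucc = 0 ∧ d i.succ = b i.castSucc := by
    intro i
    have h1 := congrFun hf i
    rw [dd_apply, h, h, Pi.zero_apply] at h1
    have h2 : c 0 + c (a i.succ) * x + c (a i.castSucc) * y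
        + c (d i.succ + b i.castSucc) * (x * y) = 0 := by
      simp only [c, map_zero, map_add]
      simp only [c] at h1
      linear_combination h1 - (c (b i.succ) + c (e i.succ) * y) * xx
        - (c (d i.castSucc) + c (e i.castSucc) * x) * yy
    obtain ⟨-, h3, h4, h5⟩ := indep h2
    exact ⟨h3, h4, by rwa [CharTwo.add_eq_zero] at h5⟩
  have ha : ∀ i, a i = 0 := Fin.cases (key 0).2.1 fun i => (key i).1
  refine lift_core _ f b d e (fun i => ?_) fun i => (key i).2.2
  rw [h, ha]; simp

lemma exact_zero (f : Fin 1 → R) (hf : aug (f 0) = 0) : ∃ g, dd 0 g = f := by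
  choose a b d e h using fun i => repr (f i)
  have ha : a 0 = 0 := by
    rw [h] at hf
    simpa only [map_add, map_mul, aug_x, aug_y, aug_c, mul_zero, add_zero] using hf
  refine lift_core _ f b d e (fun i => ?_) fun i => i.elim0
  obtain rfl : i = 0 := Fin.eq_zero i
  rw [h, ha]; simp

end KF
namespace KF
open Limits

noncomputable abbrev PX (n : ℕ) : ModuleCat.{0} R := ModuleCat.of R (Fin (n + 1) → R)

noncomputable def PC : ChainComplex (ModuleCat.{0} R) ℕ :=
  ChainComplex.of PX (fun n => ModuleCat.ofHom (dd n)) (fun n => by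
    ext1
    exact LinearMap.ext fun f => dd_dd n f)

lemma PC_d (n : ℕ) : PC.d (n + 1) n = ModuleCat.ofHom (dd n) :=
  ChainComplex.of_d PX (fun n => ModuleCat.ofHom (dd n)) n

@[reducible] noncomputable def modk : Module R (ZMod 2) :=
  Module.compHom (ZMod 2) (MonoidAlgebra.lift (ZMod 2) (ZMod 2) G 1).toRingHom

noncomputable def triv : ModuleCat.{0} R :=
  letI : Module R (ZMod 2) := modk
  ModuleCat.of R (ZMod 2)

noncomputable def augL : PX 0 ⟶ triv :=
  letI : Module R (ZMod 2) := modk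
  ModuleCat.ofHom (X := Fin 1 → R) (Y := ZMod 2)
  { toFun := fun f => aug (f 0)
    map_add' := fun f g => by simp
    map_smul' := fun r f => by
      change aug (r * f 0) = aug r * aug (f 0)
      exact map_mul _ _ _ }

lemma augL_apply (f : Fin 1 → R) : augL.hom f = aug (f 0) := rfl

lemma aug_dd (f : Fin 2 → R) : aug (dd 0 f 0) = 0 := by
  rw [dd_apply, map_add, map_mul, map_mul, aug_x, aug_y]; simp

lemma epi_aug : Epi augL := by
  rw [ModuleCat.epi_iff_surjective]
  intro a
  exact ⟨fun _ => c a, aug_c a⟩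

lemma aug_sub (g : G) (u : R) : aug (MonoidAlgebra.single g 1 * u - 1 * u) = 0 := by
  rw [map_sub, map_mul, map_mul]; simp

lemma d_aug : PC.d 1 0 ≫ augL = 0 := by
  rw [PC_d]
  ext1
  refine LinearMap.ext fun f => ?_
  exact aug_dd f

noncomputable def Pπ : PC ⟶ (ChainComplex.single₀ (ModuleCat.{0} R)).obj triv :=
  (PC.toSingle₀Equiv triv).symm ⟨augL, d_aug⟩

lemma Pπ_f : Pπ.f 0 = augL := ChainComplex.toSingle₀Equiv_symm_apply_f_zero ..

lemma quasi : QuasiIso Pπ where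
  quasiIsoAt m := by
    cases m with
    | zero =>
      rw [ChainComplex.quasiIsoAt₀_iff, ShortComplex.quasiIso_iff_of_zeros' _ (PC.shape _ _ (by simp)) rfl rfl]
      constructor
      · rw [ShortComplex.moduleCat_exact_iff]
        intro f hf
        have hf' : (Pπ.f 0).hom f = 0 := hf
        rw [Pπ_f] at hf'
        obtain ⟨g, hg⟩ := exact_zero f hf'
        refine ⟨g, ?_⟩
        change (PC.d 1 0).hom g = f
        rw [PC_d]; exact hg
      · change Epi (Pπ.f 0)
        rw [Pπ_f]
        exact epi_aug
    | succ m =>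
      rw [quasiIsoAt_iff_exactAt' (hL := ChainComplex.exactAt_succ_single_obj ..),
          HomologicalComplex.exactAt_iff' _ (m + 2) (m + 1) m (by simp) (by simp),
          ShortComplex.moduleCat_exact_iff]
      intro f hf
      have hf' : (PC.d (m + 1) m).hom f = 0 := hf
      rw [PC_d] at hf'
      obtain ⟨g, hg⟩ := exact_succ m f hf'
      refine ⟨g, ?_⟩
      change (PC.d (m + 2) (m + 1)).hom g = f
      rw [PC_d]; exact hg

noncomputable def PR : ProjectiveResolution triv where
  complex := PC
  projective n := inferInstanceAs (Projective (PX n))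
  π := Pπ
  quasiIso := quasi

abbrev PP : Set (R × R) := {p | ∃ g : G, p = (MonoidAlgebra.single g 1, 1)}
noncomputable abbrev F : ModuleCat.{0} R ⥤ ModuleCat.{0} (ZMod 2) := coinvFunctor (ZMod 2) R PP

lemma xmem (N : ModuleCat.{0} R) (v : N) : (x • v : N) ∈ relSub (ZMod 2) R PP N :=
  Submodule.subset_span ⟨(MonoidAlgebra.single s 1, 1), ⟨s, rfl⟩, v, by rw [x, sub_smul]⟩
lemma ymem (N : ModuleCat.{0} R) (v : N) : (y • v : N) ∈ relSub (ZMod 2) R PP N :=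
  Submodule.subset_span ⟨(MonoidAlgebra.single t 1, 1), ⟨t, rfl⟩, v, by rw [y, sub_smul]⟩

lemma Fd (i j : ℕ) : F.map (PC.d i j) = 0 := by
  by_cases h : j + 1 = i
  · subst h
    rw [PC_d]
    ext1
    refine Submodule.linearMap_qext _ (LinearMap.ext fun f => ?_)
    refine (Submodule.Quotient.mk_eq_zero _).2 ?_
    have h1 := xmem (PX j) (fun i => f i.succ : Fin (j + 1) → R)
    have h2 := ymem (PX j) (fun i => f i.castSucc : Fin (j + 1) → R)
    exact add_mem h1 h2
  · rw [PC.shape _ _ h]; exact F.map_zero _ _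

noncomputable def homIso (n : ℕ) :
    (F.leftDerived n).obj triv ≅ F.obj (PX n) :=
  PR.isoLeftDerivedObj F n ≪≫
    (ShortComplex.HomologyData.ofZeros
      (((F.mapHomologicalComplex _).obj PC).sc n) (Fd _ _) (Fd _ _)).left.homologyIso

noncomputable def augN (n : ℕ) :
    ((ModuleCat.restrictScalars (algebraMap (ZMod 2) R)).obj (PX n)) →ₗ[ZMod 2] (Fin (n + 1) → ZMod 2) where
  toFun f i := aug ((show Fin (n + 1) → R from f) i)
  map_add' f g := by ext i; exact map_add aug _ _
  map_smul' a f := by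
    ext i
    change aug (algebraMap (ZMod 2) R a * _) = a * _
    rw [map_mul]; congr 1; exact aug_c a

lemma ker_augN (n : ℕ) : LinearMap.ker (augN n) = relSub (ZMod 2) R PP (PX n) := by
  apply le_antisymm
  · intro f hf
    have hf' : ∀ i, aug ((show Fin (n + 1) → R from f) i) = 0 := fun i => congrFun hf i
    choose a b d e h using fun i => repr ((show Fin (n + 1) → R from f) i)
    have ha : ∀ i, a i = 0 := by
      intro i
      have := hf' i
      rw [h] at this
      simpa only [map_add, map_mul, aug_x, aug_y, aug_c, mul_zero, add_zero] using this
    have h1 := xmem (PX n) (fun i => c (b i) + c (e i) * y : Fin (n + 1) → R)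
    have h2 := ymem (PX n) (fun i => c (d i) : Fin (n + 1) → R)
    have heq : (show Fin (n + 1) → R from f) = x • (fun i => c (b i) + c (e i) * y : Fin (n + 1) → R)
        + y • (fun i => c (d i) : Fin (n + 1) → R) := by
      funext i
      refine (h i).trans ?_
      change _ = x * (c (b i) + c (e i) * y) + y * c (d i)
      rw [ha, c, map_zero]; ring
    exact (congrArg (· ∈ relSub (ZMod 2) R PP (PX n)) heq).mpr (add_mem h1 h2)
  · rw [relSub, Submodule.span_le]
    rintro _ ⟨_, ⟨g, rfl⟩, f, rfl⟩
    exact LinearMap.mem_ker.2 (funext fun i => aug_sub g ((show Fin (n + 1) → R from f) i))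

lemma augN_surj (n : ℕ) : Function.Surjective (augN n) := fun a =>
  ⟨(fun i => c (a i) : Fin (n + 1) → R), funext fun i => aug_c (a i)⟩

noncomputable def objEquiv (n : ℕ) : F.obj (PX n) ≃ₗ[ZMod 2] (Fin (n + 1) → ZMod 2) :=
  (Submodule.quotEquivOfEq _ _ (ker_augN n).symm).trans
    ((augN n).quotKerEquivOfSurjective (augN_surj n))

lemma main (n : ℕ) : Module.finrank (ZMod 2) (GroupHomology (ZMod 2) G n) = n + 1 := by
  have e := ((homIso n).toLinearEquiv.trans (objEquiv n)).finrank_eq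
  rw [Module.finrank_fin_fun] at e
  exact e

end KF

/-- The group homology of the Klein four-group `C₂ × C₂` with trivial coefficients `F₂` is an
`F₂`-vector space of dimension `n + 1` in degree `n`. -/
theorem groupHomology_kleinFour (n : ℕ) :
    Module.finrank (ZMod 2)
      (GroupHomology (ZMod 2) (Multiplicative (ZMod 2) × Multiplicative (ZMod 2)) n)
      = n + 1 := by
  exact KF.main n
end
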